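/- The integral of e^{−h₁²/2}·e^{−h₂²/2}·e^{h₃²/2}·e^{h₄²/2}·e^{−x²/2} over the region { (h₁, h₂, h₃, h₄, x) ∈ ℝ⁵ : 0 ≤ x ≤ h₄ ≤ h₃, h₃ ≤ h₁, h₃ ≤ h₂ } is finite and equals √(2π)·(1/8)·(π²/6 − (ln 2)²). -/

import Mathlib

open Real MeasureTheory

/-!
The integrand is `exp (-Q / 2)` for the quadratic form `Q = h₁² + h₂² - h₃² - h₄² + x²`, and the
region is a cone symmetric in `h₁, h₂`. Restrict to `h₂ < h₁` at the price of a factor `2`, and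
scale the other four coordinates by `b = h₂`: the radial integral `∫ b⁴ exp (-b² Q / 2) db` leaves
`3 √(π / 2) ∫ Q ^ (-5 / 2)` over the slice `h₂ = 1`, that is, over `0 ≤ x ≤ h₄ ≤ h₃ ≤ 1 < h₁`.
Integrating in the order `x`, `h₄`, `h₃`, each step has an elementary primitive, and what remains is
the integral of `-log (1 - v) / (12 (1 + v))` over `v = h₁⁻² ∈ (0, 1)`. Its primitive is
`(Li₂ u - log 2 · log u) / 12` with `u = (1 + v) / 2`, so that the value comes from
`Li₂ 1 = π² / 6` and from Euler's reflection formula at `1 / 2`.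
-/

open Set Filter Topology Pointwise
open scoped ENNReal

section Dilogarithm

/-- The dilogarithm `Li₂ x = ∑ xⁿ / n²` over `n ≥ 1`, for `x ∈ [-1, 1]`; the index is shifted by
one, and outside this interval the series diverges, so that the value is the junk value `0`. -/
noncomputable def dilog (x : ℝ) : ℝ := ∑' n : ℕ, x ^ (n + 1) / ((n : ℝ) + 1) ^ 2

lemma hasSum_one_div_succ_sq : HasSum (fun n : ℕ => 1 / ((n : ℝ) + 1) ^ 2) (π ^ 2 / 6) := by
  simpa using (hasSum_nat_add_iff' (f := fun n : ℕ => (1 : ℝ) / (n : ℝ) ^ 2) 1).2 hasSum_zeta_two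

lemma norm_dilog_term_le {x : ℝ} (hx : |x| ≤ 1) (n : ℕ) :
    ‖x ^ (n + 1) / ((n : ℝ) + 1) ^ 2‖ ≤ 1 / ((n : ℝ) + 1) ^ 2 := by
  rw [norm_div, norm_pow, norm_of_nonneg (show (0 : ℝ) ≤ (n + 1) ^ 2 by positivity)]
  gcongr
  exact pow_le_one₀ (norm_nonneg x) hx

lemma dilog_zero : dilog 0 = 0 := by simp [dilog]

lemma dilog_one : dilog 1 = π ^ 2 / 6 := by simpa [dilog] using hasSum_one_div_succ_sq.tsum_eq

lemma continuousOn_dilog : ContinuousOn dilog (Icc (-1) 1) :=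
  continuousOn_tsum (fun n => by fun_prop) hasSum_one_div_succ_sq.summable
    fun n _ hx => norm_dilog_term_le (abs_le.2 hx) n

lemma hasDerivAt_dilog {x : ℝ} (hx : |x| < 1) (hx0 : x ≠ 0) :
    HasDerivAt dilog (-log (1 - x) / x) x := by
  obtain ⟨r, hxr, hr1⟩ := exists_between hx
  have hterm (n : ℕ) (y : ℝ) : HasDerivAt (fun y : ℝ => y ^ (n + 1) / ((n : ℝ) + 1) ^ 2)
      (y ^ n / ((n : ℝ) + 1)) y := by
    refine ((hasDerivAt_pow (n + 1) y).div_const _).congr_deriv ?_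
    push_cast
    field_simp
  have hbound (n : ℕ) (y : ℝ) (hy : y ∈ Ioo (-r) r) : ‖y ^ n / ((n : ℝ) + 1)‖ ≤ r ^ n := by
    rw [norm_div, norm_pow, norm_of_nonneg (show (0 : ℝ) ≤ n + 1 by positivity)]
    refine (div_le_self (by positivity) (by simp)).trans ?_
    gcongr
    exact (abs_lt.2 hy).le
  have hsum : HasSum (fun n : ℕ => x ^ n / ((n : ℝ) + 1)) (-log (1 - x) / x) := by
    refine ((hasSum_pow_div_log_of_abs_lt_one hx).div_const x).congr_fun fun n => ?_
    rw [pow_succ]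
    field_simp
  rw [← hsum.tsum_eq]
  exact hasDerivAt_tsum_of_isPreconnected
    (summable_geometric_of_lt_one ((abs_nonneg x).trans hxr.le) hr1) isOpen_Ioo isPreconnected_Ioo
    (fun n y _ => hterm n y) hbound (abs_lt.1 hxr)
    (Summable.of_norm_bounded hasSum_one_div_succ_sq.summable (norm_dilog_term_le hx.le))
    (abs_lt.1 hxr)

lemma continuous_log_mul_log_one_sub : Continuous fun x : ℝ => log x * log (1 - x) := by
  -- Near `0` the function is `x log x` times the difference quotient of `log (1 - x)`.
  have at_zero : ContinuousAt (fun x : ℝ => log x * log (1 - x)) 0 := by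
    have hdiff : DifferentiableAt ℝ (fun x : ℝ => log (1 - x)) 0 := by
      fun_prop (disch := norm_num)
    convert (continuous_mul_log.continuousAt (x := 0)).mul (continuousAt_dslope_same.2 hdiff)
      using 2 with x
    have hslope := sub_smul_dslope (fun x : ℝ => log (1 - x)) 0 x
    simp only [sub_zero, smul_eq_mul, log_one] at hslope
    simp only [← hslope, Pi.mul_apply]
    ring
  have at_one : ContinuousAt (fun x : ℝ => log x * log (1 - x)) 1 := by
    have hcomp := at_zero.comp_of_eq (f := fun x : ℝ => 1 - x) (x := 1) (by fun_prop) (by simp)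
    simpa [Function.comp_def, mul_comm] using hcomp
  refine continuous_iff_continuousAt.2 fun x => ?_
  rcases eq_or_ne x 0 with rfl | hx0
  · exact at_zero
  rcases eq_or_ne x 1 with rfl | hx1
  · exact at_one
  exact (continuousAt_log hx0).mul (ContinuousAt.log (by fun_prop) (sub_ne_zero.2 hx1.symm))

lemma dilog_add_dilog_one_sub {x : ℝ} (hx : x ∈ Icc 0 1) :
    dilog x + dilog (1 - x) = π ^ 2 / 6 - log x * log (1 - x) := by
  set g : ℝ → ℝ := fun x => dilog x + dilog (1 - x) + log x * log (1 - x)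
  have hcont : ContinuousOn g (Icc 0 1) := by
    refine ((continuousOn_dilog.mono (Icc_subset_Icc_left (by norm_num))).add
      (continuousOn_dilog.comp (by fun_prop) ?_)).add continuous_log_mul_log_one_sub.continuousOn
    exact fun y hy => ⟨by linarith [hy.2], by linarith [hy.1]⟩
  have hderiv : ∀ y ∈ Ioo (0 : ℝ) 1, HasDerivAt g 0 y := by
    rintro y ⟨hy0, hy1⟩
    have hsub : HasDerivAt (fun x : ℝ => 1 - x) (-1) y := (hasDerivAt_id y).const_sub 1
    have hy1' : 1 - y ≠ 0 := by linarith
    have h1 := hasDerivAt_dilog (abs_lt.2 ⟨by linarith, hy1⟩) hy0.ne'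
    have h2 := (hasDerivAt_dilog (abs_lt.2 ⟨by linarith, by linarith⟩) hy1').comp y hsub
    have h3 := (hasDerivAt_log hy0.ne').mul (hsub.log hy1')
    refine ((h1.add h2).add h3).congr_deriv ?_
    rw [sub_sub_cancel]
    field_simp
    ring
  have hconst : g x = g 0 := by
    rcases hx.1.eq_or_lt with rfl | h0
    · rfl
    obtain ⟨c, -, hc⟩ := exists_hasDerivAt_eq_slope g (fun _ => 0) h0
      (hcont.mono (Icc_subset_Icc_right hx.2))
      fun y hy => hderiv y ⟨hy.1, hy.2.trans_le hx.2⟩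
    rw [eq_comm, div_eq_zero_iff, sub_zero] at hc
    exact sub_eq_zero.1 (hc.resolve_right h0.ne')
  have hzero : g 0 = π ^ 2 / 6 := by simp [g, dilog_zero, dilog_one]
  linarith

lemma dilog_one_half : dilog (1 / 2) = π ^ 2 / 12 - log 2 ^ 2 / 2 := by
  have h := dilog_add_dilog_one_sub (x := 1 / 2) ⟨by norm_num, by norm_num⟩
  rw [show (1 : ℝ) - 1 / 2 = 1 / 2 by norm_num, one_div, log_inv] at h
  rw [one_div]
  linarith

end Dilogarithm

section LIntegral

section Product

variable {α β : Type*} [MeasurableSpace α] [MeasurableSpace β] {μ : Measure α} {ν : Measure β}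

lemma setLIntegral_prod_of_mem_iff [SFinite ν] {s : Set (α × β)} {t : Set α}
    {u : α → Set β} (hs : MeasurableSet s) (ht : MeasurableSet t)
    (hstu : ∀ x y, (x, y) ∈ s ↔ x ∈ t ∧ y ∈ u x) {f : α × β → ℝ≥0∞} (hf : Measurable f) :
    ∫⁻ z in s, f z ∂μ.prod ν = ∫⁻ x in t, ∫⁻ y in u x, f (x, y) ∂ν ∂μ := by
  rw [← lintegral_indicator hs, lintegral_prod _ (hf.indicator hs).aemeasurable,
    ← lintegral_indicator ht]
  refine lintegral_congr fun x => ?_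
  by_cases hx : x ∈ t
  · have hslice : Prod.mk x ⁻¹' s = u x := by
      ext y
      simp [hstu, hx]
    rw [indicator_of_mem hx, ← hslice, ← lintegral_indicator (measurable_prodMk_left hs)]
    rfl
  · simp [hx, indicator_of_notMem, hstu]

lemma lintegral_lintegral_eq_two_mul_of_symm [LinearOrder α] [TopologicalSpace α]
    [OrderClosedTopology α] [SecondCountableTopology α] [OpensMeasurableSpace α]
    [SFinite μ] [NullSingletonClass μ] {g : α → α → ℝ≥0∞} (hg : Measurable (Function.uncurry g))
    (hsymm : ∀ a b, g a b = g b a) :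
    ∫⁻ a, ∫⁻ b, g a b ∂μ ∂μ = 2 * ∫⁻ b, ∫⁻ a in Ioi b, g a b ∂μ ∂μ := by
  have hlt : MeasurableSet {p : α × α | p.1 < p.2} := measurableSet_lt measurable_fst measurable_snd
  have hupper : ∫⁻ p in {p : α × α | p.1 < p.2}, Function.uncurry g p ∂μ.prod μ =
      ∫⁻ b, ∫⁻ a in Ioi b, g a b ∂μ ∂μ := by
    rw [setLIntegral_prod_of_mem_iff (t := univ) (u := Ioi) hlt .univ (by simp) hg,
      Measure.restrict_univ]
    simp only [Function.uncurry_apply_pair, hsymm]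
  have hlower : ∫⁻ p in {p : α × α | p.1 < p.2}ᶜ, Function.uncurry g p ∂μ.prod μ =
      ∫⁻ p in {p : α × α | p.1 < p.2}, Function.uncurry g p ∂μ.prod μ := by
    rw [setLIntegral_prod_of_mem_iff (t := univ) (u := Iic) hlt.compl .univ (by simp) hg,
      ← Measure.measurePreserving_swap.setLIntegral_comp_preimage hlt hg,
      setLIntegral_prod_of_mem_iff (t := univ) (u := Iio) (f := fun p => Function.uncurry g p.swap)
        (measurable_swap hlt) .univ (by simp) (hg.comp measurable_swap)]
    refine lintegral_congr fun a => ?_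
    rw [setLIntegral_congr Iio_ae_eq_Iic.symm]
    exact lintegral_congr fun b => hsymm a b
  rw [← hupper, two_mul]
  nth_rw 2 [← hlower]
  rw [lintegral_add_compl _ hlt, lintegral_prod _ hg.aemeasurable]
  rfl

end Product

section Dilation

variable {E : Type*} [NormedAddCommGroup E] [NormedSpace ℝ E] [FiniteDimensional ℝ E]

instance isAddHaarMeasure_volume_prod [MeasureSpace E] [BorelSpace E] {F : Type*}
    [NormedAddCommGroup F] [NormedSpace ℝ F] [FiniteDimensional ℝ F] [MeasureSpace F] [BorelSpace F]
    [(volume : Measure E).IsAddHaarMeasure] [(volume : Measure F).IsAddHaarMeasure] :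
    (volume : Measure (E × F)).IsAddHaarMeasure :=
  inferInstanceAs (Measure.prod volume volume).IsAddHaarMeasure

variable [MeasurableSpace E] [BorelSpace E] (μ : Measure E) [μ.IsAddHaarMeasure]

lemma setLIntegral_smul_set (f : E → ℝ≥0∞) {c : ℝ} (hc : c ≠ 0) (s : Set E) :
    ∫⁻ x in c • s, f x ∂μ =
      ENNReal.ofReal |c ^ Module.finrank ℝ E| * ∫⁻ x in s, f (c • x) ∂μ := by
  have hemb : MeasurableEmbedding fun x : E => c • x := measurableEmbedding_const_smul₀ hc
  have hpre : (fun x : E => c • x) ⁻¹' (c • s) = s := by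
    ext x
    exact smul_mem_smul_set_iff₀ hc s x
  rw [← hemb.lintegral_map, ← hpre, ← hemb.restrict_map, hpre, Measure.map_addHaar_smul μ hc,
    Measure.restrict_smul, lintegral_smul_measure, smul_eq_mul, ← mul_assoc,
    ← ENNReal.ofReal_mul (abs_nonneg _), ← abs_mul, mul_inv_cancel₀ (pow_ne_zero _ hc)]
  simp

lemma lintegral_Ioi_setLIntegral_smul_set {f : ℝ → E → ℝ≥0∞}
    (hf : Measurable (Function.uncurry f)) (s : Set E) :
    ∫⁻ b in Ioi (0 : ℝ), ∫⁻ x in b • s, f b x ∂μ =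
      ∫⁻ x in s, (∫⁻ b in Ioi (0 : ℝ),
        ENNReal.ofReal (b ^ Module.finrank ℝ E) * f b (b • x)) ∂μ := by
  have hscaled (b : ℝ) (hb : b ∈ Ioi (0 : ℝ)) : ∫⁻ x in b • s, f b x ∂μ =
      ∫⁻ x in s, ENNReal.ofReal (b ^ Module.finrank ℝ E) * f b (b • x) ∂μ := by
    rw [setLIntegral_smul_set μ _ (ne_of_gt hb), abs_of_pos (pow_pos hb _), lintegral_const_mul]
    exact (hf.comp measurable_prodMk_left).comp (measurable_const_smul b)
  rw [setLIntegral_congr_fun measurableSet_Ioi hscaled, lintegral_lintegral_swap]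
  have hcomp : Measurable fun p : ℝ × E => f p.1 (p.1 • p.2) :=
    hf.comp (g := Function.uncurry f) (f := fun p : ℝ × E => (p.1, p.1 • p.2)) (by fun_prop)
  exact (Measurable.mul (by fun_prop) hcomp).aemeasurable

end Dilation

section FundamentalTheorem

variable {F f : ℝ → ℝ}

lemma setLIntegral_Icc_of_hasDerivAt_of_nonneg {a b : ℝ} (hab : a ≤ b)
    (hcont : ContinuousOn F (Icc a b)) (hderiv : ∀ x ∈ Ioo a b, HasDerivAt F (f x) x)
    (hnonneg : ∀ x ∈ Ioo a b, 0 ≤ f x) :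
    ∫⁻ x in Icc a b, ENNReal.ofReal (f x) = ENNReal.ofReal (F b - F a) := by
  have hint := intervalIntegral.integrableOn_deriv_of_nonneg hcont hderiv hnonneg
  rw [← intervalIntegral.integral_eq_sub_of_hasDerivAt_of_le hab hcont hderiv
      ((intervalIntegrable_iff_integrableOn_Ioc_of_le hab).2 hint),
    intervalIntegral.integral_of_le hab, integral_Ioc_eq_integral_Ioo,
    setLIntegral_congr Ioo_ae_eq_Icc.symm,
    ofReal_integral_eq_lintegral_ofReal (hint.mono_set Ioo_subset_Ioc_self)]
  exact ae_restrict_of_forall_mem measurableSet_Ioo hnonneg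

lemma setLIntegral_Ioi_of_hasDerivAt_of_nonneg {a l : ℝ}
    (hcont : ContinuousWithinAt F (Ici a) a) (hderiv : ∀ x ∈ Ioi a, HasDerivAt F (f x) x)
    (hnonneg : ∀ x ∈ Ioi a, 0 ≤ f x) (hlim : Tendsto F atTop (𝓝 l)) :
    ∫⁻ x in Ioi a, ENNReal.ofReal (f x) = ENNReal.ofReal (l - F a) := by
  rw [← integral_Ioi_of_hasDerivAt_of_nonneg hcont hderiv hnonneg hlim,
    ofReal_integral_eq_lintegral_ofReal
      (integrableOn_Ioi_deriv_of_nonneg hcont hderiv hnonneg hlim)]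
  exact ae_restrict_of_forall_mem measurableSet_Ioi hnonneg

end FundamentalTheorem

lemma setLIntegral_Ioi_even_pow_mul_exp_neg {q : ℝ} (hq : 0 < q) (n : ℕ) :
    ∫⁻ b in Ioi (0 : ℝ), ENNReal.ofReal (b ^ (2 * n) * rexp (-(b ^ 2 * q) / 2)) =
      ENNReal.ofReal (√(π / 2) * (2 * n - 1).doubleFactorial * (1 / (q ^ n * √q))) := by
  have hrpow (b : ℝ) : b ^ (2 * n) * rexp (-(b ^ 2 * q) / 2) =
      b ^ ((2 * n : ℕ) : ℝ) * rexp (-(q / 2) * b ^ (2 : ℝ)) := by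
    rw [rpow_natCast, rpow_two]
    ring_nf
  have hint : IntegrableOn (fun b : ℝ => b ^ ((2 * n : ℕ) : ℝ) * rexp (-(q / 2) * b ^ (2 : ℝ)))
      (Ioi 0) := by
    simpa only [rpow_two] using integrableOn_rpow_mul_exp_neg_mul_sq (b := q / 2) (by positivity)
      (s := (2 * n : ℕ)) (by linarith [(2 * n).cast_nonneg (α := ℝ)])
  have hscale : (q / 2) ^ (-(n + 1 / 2) : ℝ) = 2 ^ n * √2 / (q ^ n * √q) := by
    rw [rpow_neg (by positivity), rpow_add (by positivity), rpow_natCast, ← sqrt_eq_rpow,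
      sqrt_div hq.le, div_pow]
    field_simp
  simp only [hrpow]
  rw [← ofReal_integral_eq_lintegral_ofReal hint (ae_restrict_of_forall_mem measurableSet_Ioi
      fun b (hb : 0 < b) => by simp only [Pi.zero_apply]; positivity),
    integral_rpow_mul_exp_neg_mul_rpow two_pos
      (by linarith [(2 * n).cast_nonneg (α := ℝ)]) (by positivity),
    show (-(((2 * n : ℕ) : ℝ) + 1) / 2) = -(n + 1 / 2) by push_cast; ring,
    show ((((2 * n : ℕ) : ℝ) + 1) / 2) = n + 1 / 2 by push_cast; ring,
    Gamma_nat_add_half, hscale, sqrt_div pi_pos.le]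
  congr 1
  field_simp
  rw [sq_sqrt zero_le_two]

lemma integrable_and_integral_eq_of_lintegral_eq {α : Type*} [MeasurableSpace α] {μ : Measure α}
    {f : α → ℝ} {c : ℝ} (hf : AEStronglyMeasurable f μ) (hf0 : 0 ≤ᵐ[μ] f) (hc : 0 ≤ c)
    (h : ∫⁻ x, ENNReal.ofReal (f x) ∂μ = ENNReal.ofReal c) :
    Integrable f μ ∧ ∫ x, f x ∂μ = c :=
  ⟨(lintegral_ofReal_ne_top_iff_integrable hf hf0).1 (h ▸ ENNReal.ofReal_ne_top), by
    rw [integral_eq_lintegral_of_nonneg_ae hf0 hf, h, ENNReal.toReal_ofReal hc]⟩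

end LIntegral

section Primitives

lemma hasDerivAt_primitive_add_sq {A : ℝ} (hA : 0 < A) (w : ℝ) :
    HasDerivAt
      (fun w => w / (3 * A * ((A + w ^ 2) * √(A + w ^ 2))) + 2 * w / (3 * A ^ 2 * √(A + w ^ 2)))
      (1 / ((A + w ^ 2) ^ 2 * √(A + w ^ 2))) w := by
  have hq : 0 < A + w ^ 2 := by positivity
  have hsq : HasDerivAt (fun w : ℝ => A + w ^ 2) (2 * w) w := by
    simpa using (hasDerivAt_pow 2 w).const_add A
  have hsqrt := hsq.sqrt hq.ne'
  have h1 := (hasDerivAt_id w).div ((hsq.fun_mul hsqrt).const_mul (3 * A)) (by positivity)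
  have h2 := ((hasDerivAt_id w).const_mul 2).div (hsqrt.const_mul (3 * A ^ 2)) (by positivity)
  refine (h1.add h2).congr_deriv ?_
  have hr : √(A + w ^ 2) ^ 2 = A + w ^ 2 := sq_sqrt hq.le
  have hr0 : 0 < √(A + w ^ 2) := by positivity
  simp only [id]
  generalize √(A + w ^ 2) = r at *
  obtain rfl : A = r ^ 2 - w ^ 2 := by linarith
  simp only [sub_add_cancel]
  field_simp
  ring

lemma hasDerivAt_primitive_sub_sq {R z : ℝ} (hR : 0 < R) (hz : R - z ^ 2 ≠ 0) :
    HasDerivAt (fun z => -log (R - z ^ 2) / (6 * (R * √R)) + (R - z ^ 2)⁻¹ / (3 * √R))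
      (z / (3 * (R - z ^ 2) * (R * √R)) + 2 * z / (3 * (R - z ^ 2) ^ 2 * √R)) z := by
  have hsq : HasDerivAt (fun z : ℝ => R - z ^ 2) (-(2 * z)) z := by
    simpa using (hasDerivAt_pow 2 z).const_sub R
  refine (((hsq.log hz).neg.div_const _).add ((hsq.inv hz).div_const _)).congr_deriv ?_
  field_simp
  ring

lemma hasDerivAt_primitive_log_ratio {S y : ℝ} (hS : S ≠ 0) (hy : 0 < S - 2 * y ^ 2) :
    HasDerivAt (fun y => y / (6 * S * √(S - y ^ 2)) * (log (S - y ^ 2) - log (S - 2 * y ^ 2)))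
      ((log (S - y ^ 2) - log (S - 2 * y ^ 2)) / (6 * ((S - y ^ 2) * √(S - y ^ 2))) +
        y ^ 2 / (3 * ((S - y ^ 2) * √(S - y ^ 2)) * (S - 2 * y ^ 2))) y := by
  have hq : 0 < S - y ^ 2 := by linarith [sq_nonneg y]
  have hsq : HasDerivAt (fun y : ℝ => S - y ^ 2) (-(2 * y)) y := by
    simpa using (hasDerivAt_pow 2 y).const_sub S
  have htwo : HasDerivAt (fun y : ℝ => S - 2 * y ^ 2) (-(2 * (2 * y))) y := by
    simpa using ((hasDerivAt_pow 2 y).const_mul 2).const_sub S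
  have hfrac := (hasDerivAt_id y).div ((hsq.sqrt hq.ne').const_mul (6 * S)) (by positivity)
  refine (hfrac.mul ((hsq.log hq.ne').sub (htwo.log hy.ne'))).congr_deriv ?_
  have hr : √(S - y ^ 2) ^ 2 = S - y ^ 2 := sq_sqrt hq.le
  have hr0 : 0 < √(S - y ^ 2) := by positivity
  simp only [id, Pi.sub_apply, Pi.div_apply]
  generalize log (S - y ^ 2) = l₁, log (S - 2 * y ^ 2) = l₂, √(S - y ^ 2) = r at *
  obtain rfl : S = r ^ 2 + y ^ 2 := by linarith
  rw [show r ^ 2 + y ^ 2 - 2 * y ^ 2 = r ^ 2 - y ^ 2 by ring] at hy ⊢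
  simp only [add_sub_cancel_right]
  field_simp
  ring

lemma hasDerivAt_primitive_dilog {t : ℝ} (ht : 1 < t) :
    HasDerivAt (fun t => -(dilog ((1 + (t ^ 2)⁻¹) / 2) - log 2 * log ((1 + (t ^ 2)⁻¹) / 2)) / 12)
      (-(log (1 - (t ^ 2)⁻¹) / (6 * (t ^ 2 + 1) * t))) t := by
  have hv0 : 0 < (t ^ 2)⁻¹ := by positivity
  have hv1 : (t ^ 2)⁻¹ < 1 := inv_lt_one_of_one_lt₀ (one_lt_pow₀ ht two_ne_zero)
  have hu : HasDerivAt (fun t : ℝ => (1 + (t ^ 2)⁻¹) / 2) (-1 / t ^ 3) t := by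
    refine ((((hasDerivAt_pow 2 t).inv (by positivity)).const_add 1).div_const 2).congr_deriv ?_
    norm_num
    field_simp
  have hdilog := (hasDerivAt_dilog (x := (1 + (t ^ 2)⁻¹) / 2)
    (abs_lt.2 ⟨by linarith, by linarith⟩) (by positivity)).comp t hu
  refine ((hdilog.sub ((hu.log (by positivity)).const_mul (log 2))).neg.div_const 12).congr_deriv ?_
  rw [show 1 - (1 + (t ^ 2)⁻¹) / 2 = (1 - (t ^ 2)⁻¹) / 2 by ring, log_div (by linarith) two_ne_zero]
  field_simp
  ring

end Primitives

section IteratedIntegrals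

lemma setLIntegral_Icc_one_div_add_sq_pow {A z : ℝ} (hA : 0 < A) (hz : 0 ≤ z) :
    ∫⁻ w in Icc 0 z, ENNReal.ofReal (1 / ((A + w ^ 2) ^ 2 * √(A + w ^ 2))) =
      ENNReal.ofReal (z / (3 * A * ((A + z ^ 2) * √(A + z ^ 2))) +
        2 * z / (3 * A ^ 2 * √(A + z ^ 2))) := by
  have hderiv := hasDerivAt_primitive_add_sq hA
  rw [setLIntegral_Icc_of_hasDerivAt_of_nonneg hz (HasDerivAt.continuousOn fun w _ => hderiv w)
    (fun w _ => hderiv w) (fun w _ => by positivity)]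
  simp

lemma setLIntegral_Icc_div_sub_sq {R y : ℝ} (hy : 0 ≤ y) (hR : y ^ 2 < R) :
    ∫⁻ z in Icc 0 y, ENNReal.ofReal
        (z / (3 * (R - z ^ 2) * (R * √R)) + 2 * z / (3 * (R - z ^ 2) ^ 2 * √R)) =
      ENNReal.ofReal ((log R - log (R - y ^ 2)) / (6 * (R * √R)) +
        y ^ 2 / (3 * (R * √R) * (R - y ^ 2))) := by
  have hR0 : 0 < R := (sq_nonneg y).trans_lt hR
  have hpos {z : ℝ} (hz : z ∈ Icc 0 y) : 0 < R - z ^ 2 := by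
    linarith [pow_le_pow_left₀ hz.1 hz.2 2]
  have hderiv (z : ℝ) (hz : z ∈ Icc 0 y) := hasDerivAt_primitive_sub_sq hR0 (hpos hz).ne'
  rw [setLIntegral_Icc_of_hasDerivAt_of_nonneg hy (HasDerivAt.continuousOn hderiv)
    fun z hz => hderiv z (Ioo_subset_Icc_self hz)]
  · congr 1
    have hy' := (hpos ⟨hy, le_rfl⟩).ne'
    simp only [zero_pow two_ne_zero, sub_zero]
    field_simp
    ring
  · intro z hz
    have := hpos (Ioo_subset_Icc_self hz)
    have := hz.1
    positivity

lemma setLIntegral_Icc_log_ratio_div {S : ℝ} (hS : 2 < S) :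
    ∫⁻ y in Icc (0 : ℝ) 1, ENNReal.ofReal
        ((log (S - y ^ 2) - log (S - 2 * y ^ 2)) / (6 * ((S - y ^ 2) * √(S - y ^ 2))) +
          y ^ 2 / (3 * ((S - y ^ 2) * √(S - y ^ 2)) * (S - 2 * y ^ 2))) =
      ENNReal.ofReal ((log (S - 1) - log (S - 2)) / (6 * S * √(S - 1))) := by
  have hpos {y : ℝ} (hy : y ∈ Icc (0 : ℝ) 1) : 0 < S - 2 * y ^ 2 := by
    linarith [pow_le_one₀ (n := 2) hy.1 hy.2]
  have hderiv (y : ℝ) (hy : y ∈ Icc (0 : ℝ) 1) :=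
    hasDerivAt_primitive_log_ratio (by linarith : S ≠ 0) (hpos hy)
  rw [setLIntegral_Icc_of_hasDerivAt_of_nonneg zero_le_one (HasDerivAt.continuousOn hderiv)
    fun y hy => hderiv y (Ioo_subset_Icc_self hy)]
  · congr 1
    simp only [one_pow, mul_one, zero_div, zero_mul, sub_zero]
    ring
  · intro y hy
    have hy' := hpos (Ioo_subset_Icc_self hy)
    have hq : 0 < S - y ^ 2 := by linarith [sq_nonneg y]
    have hlog : 0 ≤ log (S - y ^ 2) - log (S - 2 * y ^ 2) :=
      sub_nonneg.2 (log_le_log hy' (by linarith [sq_nonneg y]))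
    positivity

lemma setLIntegral_Ioi_log_one_sub_inv_sq_div :
    ∫⁻ t in Ioi (1 : ℝ), ENNReal.ofReal (-(log (1 - (t ^ 2)⁻¹) / (6 * (t ^ 2 + 1) * t))) =
      ENNReal.ofReal (1 / 12 * (π ^ 2 / 12 - log 2 ^ 2 / 2)) := by
  have hlim : Tendsto (fun t : ℝ => (1 + (t ^ 2)⁻¹) / 2) atTop (𝓝 (1 / 2)) := by
    simpa using ((tendsto_inv_atTop_zero.comp
      (tendsto_pow_atTop (α := ℝ) two_ne_zero)).const_add 1).div_const 2
  have hdilog : ContinuousAt dilog (1 / 2) :=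
    continuousOn_dilog.continuousAt (Icc_mem_nhds (by norm_num) (by norm_num))
  have hinv {t : ℝ} (ht : 1 ≤ t) : 0 < (t ^ 2)⁻¹ ∧ (t ^ 2)⁻¹ ≤ 1 :=
    ⟨by positivity, inv_le_one_of_one_le₀ (one_le_pow₀ ht)⟩
  have hcont : ContinuousOn (fun t : ℝ => (1 + (t ^ 2)⁻¹) / 2) (Ici 1) :=
    (continuousOn_const.add ((continuousOn_pow 2).inv₀ fun t ht =>
      (inv_pos.1 (hinv ht).1).ne')).div_const 2
  have hmaps : MapsTo (fun t : ℝ => (1 + (t ^ 2)⁻¹) / 2) (Ici 1) (Icc (-1) 1) := fun t ht =>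
    ⟨by linarith [hinv ht], by linarith [hinv ht]⟩
  rw [setLIntegral_Ioi_of_hasDerivAt_of_nonneg _ (fun t ht => hasDerivAt_primitive_dilog ht) _
    (((hdilog.tendsto.comp hlim).sub
      ((hlim.log (by norm_num)).const_mul (log 2))).neg.div_const 12)]
  · congr 1
    have hstart : (1 + ((1 : ℝ) ^ 2)⁻¹) / 2 = 1 := by norm_num
    rw [hstart, dilog_one, dilog_one_half, log_one, one_div, log_inv]
    ring
  · refine ContinuousOn.continuousWithinAt ?_ self_mem_Ici
    refine (((continuousOn_dilog.comp hcont hmaps).sub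
      (continuousOn_const.mul (hcont.log fun t _ => by positivity))).neg.div_const 12)
  · intro t ht
    have ht0 : 0 < t := one_pos.trans ht
    have hlog : log (1 - (t ^ 2)⁻¹) ≤ 0 :=
      log_nonpos (by linarith [hinv (le_of_lt ht)]) (by linarith [hinv (le_of_lt ht)])
    exact neg_nonneg.2 (div_nonpos_of_nonpos_of_nonneg hlog (by positivity))

end IteratedIntegrals

section Cone

/-- The chains `0 ≤ x ≤ h₄ ≤ h₃ ≤ m`, with coordinates in the order `(h₃, h₄, x)`: the slices of the
region of integration, for `m = min h₁ h₂`. -/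
def chainBelow (m : ℝ) : Set (ℝ × ℝ × ℝ) :=
  {r | 0 ≤ r.2.2 ∧ r.2.2 ≤ r.2.1 ∧ r.2.1 ≤ r.1 ∧ r.1 ≤ m}

/-- The quadratic form `Q` in the coordinates `(h₁, h₂, h₃, h₄, x)` for which the integrand is
`exp (-Q / 2)`. -/
def gaussForm (h : ℝ × ℝ × ℝ × ℝ × ℝ) : ℝ :=
  h.1 ^ 2 + h.2.1 ^ 2 - h.2.2.1 ^ 2 - h.2.2.2.1 ^ 2 + h.2.2.2.2 ^ 2

@[fun_prop]
lemma continuous_gaussForm : Continuous gaussForm := by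
  unfold gaussForm
  fun_prop

lemma gaussForm_smul (c : ℝ) (h : ℝ × ℝ × ℝ × ℝ × ℝ) :
    gaussForm (c • h) = c ^ 2 * gaussForm h := by
  simp only [gaussForm, Prod.smul_fst, Prod.smul_snd, smul_eq_mul]
  ring

lemma gaussForm_pos {q : ℝ × ℝ × ℝ × ℝ} (hq : q ∈ Ioi 1 ×ˢ chainBelow 1) :
    0 < gaussForm (q.1, 1, q.2) := by
  obtain ⟨ht, hw, hwz, hzy, hy⟩ := hq
  have ht2 : 1 < q.1 ^ 2 := one_lt_pow₀ ht two_ne_zero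
  have hy2 : q.2.1 ^ 2 ≤ 1 := pow_le_one₀ (hw.trans (hwz.trans hzy)) hy
  have hz2 : q.2.2.1 ^ 2 ≤ q.2.1 ^ 2 := pow_le_pow_left₀ (hw.trans hwz) hzy 2
  simp only [gaussForm]
  linarith [sq_nonneg q.2.2.2]

lemma measurableSet_mem_chainBelow {γ : Type*} [MeasurableSpace γ] {r : γ → ℝ × ℝ × ℝ} {m : γ → ℝ}
    (hr : Measurable r) (hm : Measurable m) : MeasurableSet {x | r x ∈ chainBelow (m x)} := by
  simp only [chainBelow, ofPred_and]
  exact (measurableSet_le (by fun_prop) (by fun_prop)).inter <|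
    (measurableSet_le (by fun_prop) (by fun_prop)).inter <|
      (measurableSet_le (by fun_prop) (by fun_prop)).inter (measurableSet_le (by fun_prop) hm)

lemma measurableSet_chainBelow (m : ℝ) : MeasurableSet (chainBelow m) :=
  measurableSet_mem_chainBelow measurable_id measurable_const

lemma chainBelow_eq_empty {m : ℝ} (hm : m < 0) : chainBelow m = ∅ :=
  eq_empty_of_forall_notMem fun _ ⟨hx, hx4, h43, h3⟩ =>
    hm.not_ge (hx.trans (hx4.trans (h43.trans h3)))

lemma smul_Ioi_prod_chainBelow {b : ℝ} (hb : 0 < b) :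
    b • (Ioi (1 : ℝ) ×ˢ chainBelow 1) = Ioi b ×ˢ chainBelow b := by
  ext q
  rw [mem_smul_set_iff_inv_smul_mem₀ hb.ne']
  simp [chainBelow, inv_mul_le_iff₀ hb, lt_inv_mul_iff₀ hb, hb, mul_inv_cancel_left₀ hb.ne']

lemma setLIntegral_chainBelow {f : ℝ × ℝ × ℝ → ℝ≥0∞} (hf : Measurable f) (m : ℝ) :
    ∫⁻ r in chainBelow m, f r =
      ∫⁻ y in Icc 0 m, ∫⁻ z in Icc 0 y, ∫⁻ w in Icc 0 z, f (y, z, w) := by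
  rw [Measure.volume_eq_prod, setLIntegral_prod_of_mem_iff (t := Icc 0 m)
    (u := fun y => {p : ℝ × ℝ | 0 ≤ p.2 ∧ p.2 ≤ p.1 ∧ p.1 ≤ y}) (measurableSet_chainBelow m)
    measurableSet_Icc ?_ hf]
  · refine lintegral_congr fun y => ?_
    rw [Measure.volume_eq_prod]
    refine setLIntegral_prod_of_mem_iff (by measurability) measurableSet_Icc ?_
      (hf.comp measurable_prodMk_left)
    simp only [mem_ofPred_eq, mem_Icc]
    grind
  · simp only [chainBelow, mem_ofPred_eq, mem_Icc]
    grind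

lemma setLIntegral_chainBelow_min {f : ℝ × ℝ × ℝ × ℝ × ℝ → ℝ≥0∞} (hf : Measurable f) :
    ∫⁻ h in {h : ℝ × ℝ × ℝ × ℝ × ℝ | h.2.2 ∈ chainBelow (min h.1 h.2.1)}, f h =
      ∫⁻ a, ∫⁻ b, ∫⁻ r in chainBelow (min a b), f (a, b, r) := by
  rw [Measure.volume_eq_prod, setLIntegral_prod_of_mem_iff (t := univ)
    (u := fun a => {p : ℝ × ℝ × ℝ × ℝ | p.2 ∈ chainBelow (min a p.1)})
    (measurableSet_mem_chainBelow (by fun_prop) (by fun_prop)) .univ (by simp) hf,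
    Measure.restrict_univ]
  refine lintegral_congr fun a => ?_
  rw [Measure.volume_eq_prod, setLIntegral_prod_of_mem_iff (t := univ)
    (u := fun b => chainBelow (min a b)) (f := fun p => f (a, p))
    (measurableSet_mem_chainBelow (by fun_prop) (by fun_prop)) .univ (by simp)
    (hf.comp measurable_prodMk_left), Measure.restrict_univ]

lemma setLIntegral_chainBelow_min_of_symm {f : ℝ × ℝ × ℝ × ℝ × ℝ → ℝ≥0∞} (hf : Measurable f)
    (hsymm : ∀ a b r, f (a, b, r) = f (b, a, r)) :
    ∫⁻ h in {h : ℝ × ℝ × ℝ × ℝ × ℝ | h.2.2 ∈ chainBelow (min h.1 h.2.1)}, f h =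
      2 * ∫⁻ b in Ioi 0, ∫⁻ q in Ioi b ×ˢ chainBelow b, f (q.1, b, q.2) := by
  have hmeas : Measurable
      (Function.uncurry fun a b => ∫⁻ r in chainBelow (min a b), f (a, b, r)) := by
    simp_rw [← lintegral_indicator (measurableSet_chainBelow _)]
    have hind : Measurable
        ({p : (ℝ × ℝ) × ℝ × ℝ × ℝ | p.2 ∈ chainBelow (min p.1.1 p.1.2)}.indicator
          fun p => f (p.1.1, p.1.2, p.2)) :=
      (hf.comp (by fun_prop)).indicator (measurableSet_mem_chainBelow (by fun_prop) (by fun_prop))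
    exact hind.lintegral_prod_right'
  have hslice (b : ℝ) : ∫⁻ a in Ioi b, ∫⁻ r in chainBelow (min a b), f (a, b, r) =
      ∫⁻ q in Ioi b ×ˢ chainBelow b, f (q.1, b, q.2) := by
    have hfb : Measurable fun q : ℝ × ℝ × ℝ × ℝ => f (q.1, b, q.2) := hf.comp (by fun_prop)
    rw [Measure.volume_eq_prod ℝ (ℝ × ℝ × ℝ), setLIntegral_prod _ hfb.aemeasurable]
    refine setLIntegral_congr_fun measurableSet_Ioi fun a ha => ?_
    rw [min_eq_right (le_of_lt ha)]
  have hneg : ∫⁻ b in Iio (0 : ℝ), ∫⁻ q in Ioi b ×ˢ chainBelow b, f (q.1, b, q.2) = 0 :=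
    setLIntegral_eq_zero measurableSet_Iio fun b hb => by simp [chainBelow_eq_empty hb]
  rw [setLIntegral_chainBelow_min hf, lintegral_lintegral_eq_two_mul_of_symm hmeas
    fun a b => by simp only [min_comm a, hsymm a]]
  simp only [hslice]
  rw [← lintegral_add_compl _ measurableSet_Iio, hneg, zero_add, compl_Iio,
    setLIntegral_congr Ioi_ae_eq_Ici]

lemma setLIntegral_cone_exp_neg_gaussForm :
    ∫⁻ b in Ioi 0, ∫⁻ q in Ioi b ×ˢ chainBelow b,
        ENNReal.ofReal (rexp (-gaussForm (q.1, b, q.2) / 2)) =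
      ENNReal.ofReal (3 * √(π / 2)) * ∫⁻ q in Ioi 1 ×ˢ chainBelow 1, ENNReal.ofReal
        (1 / (gaussForm (q.1, 1, q.2) ^ 2 * √(gaussForm (q.1, 1, q.2)))) := by
  have hrescale (b : ℝ) (hb : b ∈ Ioi (0 : ℝ)) : ∫⁻ q in Ioi b ×ˢ chainBelow b,
        ENNReal.ofReal (rexp (-gaussForm (q.1, b, q.2) / 2)) =
      ∫⁻ q in b • (Ioi (1 : ℝ) ×ˢ chainBelow 1),
        ENNReal.ofReal (rexp (-gaussForm (q.1, b, q.2) / 2)) := by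
    rw [smul_Ioi_prod_chainBelow hb]
  rw [setLIntegral_congr_fun measurableSet_Ioi hrescale,
    lintegral_Ioi_setLIntegral_smul_set volume (by fun_prop), ← lintegral_const_mul _ (by fun_prop)]
  refine setLIntegral_congr_fun (measurableSet_Ioi.prod (measurableSet_chainBelow 1)) fun q hq => ?_
  rw [← ENNReal.ofReal_mul (by positivity)]
  convert setLIntegral_Ioi_even_pow_mul_exp_neg (gaussForm_pos hq) 2 using 1
  · refine setLIntegral_congr_fun measurableSet_Ioi fun b (hb : 0 < b) => ?_
    have hform : gaussForm ((b • q).1, b, (b • q).2) = b ^ 2 * gaussForm (q.1, 1, q.2) := by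
      rw [← gaussForm_smul]
      simp
    rw [← ENNReal.ofReal_mul (by positivity)]
    simp only [hform, Module.finrank_prod, Module.finrank_self]
  · norm_num [Nat.doubleFactorial]
    ring_nf

lemma setLIntegral_chainBelow_one {t : ℝ} (ht : 1 < t) :
    ∫⁻ r in chainBelow 1, ENNReal.ofReal (1 / (gaussForm (t, 1, r) ^ 2 * √(gaussForm (t, 1, r)))) =
      ENNReal.ofReal (-(log (1 - (t ^ 2)⁻¹) / (6 * (t ^ 2 + 1) * t))) := by
  have ht2 : 1 < t ^ 2 := one_lt_pow₀ ht two_ne_zero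
  rw [setLIntegral_chainBelow (by fun_prop)]
  calc
    _ = ∫⁻ y in Icc (0 : ℝ) 1, ∫⁻ z in Icc 0 y, ENNReal.ofReal
          (z / (3 * (t ^ 2 + 1 - y ^ 2 - z ^ 2) * ((t ^ 2 + 1 - y ^ 2) * √(t ^ 2 + 1 - y ^ 2))) +
            2 * z / (3 * (t ^ 2 + 1 - y ^ 2 - z ^ 2) ^ 2 * √(t ^ 2 + 1 - y ^ 2))) := by
      refine setLIntegral_congr_fun measurableSet_Icc fun y hy =>
        setLIntegral_congr_fun measurableSet_Icc fun z hz => ?_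
      have hy2 : y ^ 2 ≤ 1 := pow_le_one₀ hy.1 hy.2
      have hz2 : z ^ 2 ≤ y ^ 2 := pow_le_pow_left₀ hz.1 hz.2 2
      have hw := setLIntegral_Icc_one_div_add_sq_pow
        (A := t ^ 2 + 1 - y ^ 2 - z ^ 2) (by linarith) hz.1
      simpa only [gaussForm, one_pow, sub_add_cancel] using hw
    _ = ∫⁻ y in Icc (0 : ℝ) 1, ENNReal.ofReal
          ((log (t ^ 2 + 1 - y ^ 2) - log (t ^ 2 + 1 - 2 * y ^ 2)) /
              (6 * ((t ^ 2 + 1 - y ^ 2) * √(t ^ 2 + 1 - y ^ 2))) +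
            y ^ 2 / (3 * ((t ^ 2 + 1 - y ^ 2) * √(t ^ 2 + 1 - y ^ 2)) *
              (t ^ 2 + 1 - 2 * y ^ 2))) := by
      refine setLIntegral_congr_fun measurableSet_Icc fun y hy => ?_
      have hy2 : y ^ 2 ≤ 1 := pow_le_one₀ hy.1 hy.2
      rw [setLIntegral_Icc_div_sub_sq hy.1 (by linarith), sub_sub, ← two_mul]
    _ = ENNReal.ofReal
          ((log (t ^ 2 + 1 - 1) - log (t ^ 2 + 1 - 2)) / (6 * (t ^ 2 + 1) * √(t ^ 2 + 1 - 1))) :=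
      setLIntegral_Icc_log_ratio_div (by linarith)
    _ = ENNReal.ofReal (-(log (1 - (t ^ 2)⁻¹) / (6 * (t ^ 2 + 1) * t))) := by
      have hlog : log (1 - (t ^ 2)⁻¹) = log (t ^ 2 + 1 - 2) - log (t ^ 2) := by
        rw [← log_div (by linarith) (by positivity)]
        congr 1
        field_simp
        ring
      rw [hlog, add_sub_cancel_right, sqrt_sq (by linarith), ← neg_div, neg_sub]

lemma setLIntegral_chainBelow_min_exp_neg_gaussForm :
    ∫⁻ h in {h : ℝ × ℝ × ℝ × ℝ × ℝ | h.2.2 ∈ chainBelow (min h.1 h.2.1)},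
        ENNReal.ofReal (rexp (-gaussForm h / 2)) =
      ENNReal.ofReal (√(2 * π) * (1 / 8) * (π ^ 2 / 6 - log 2 ^ 2)) := by
  have hcross : ∫⁻ q in Ioi (1 : ℝ) ×ˢ chainBelow 1, ENNReal.ofReal
        (1 / (gaussForm (q.1, 1, q.2) ^ 2 * √(gaussForm (q.1, 1, q.2)))) =
      ENNReal.ofReal (1 / 12 * (π ^ 2 / 12 - log 2 ^ 2 / 2)) := by
    rw [Measure.volume_eq_prod, setLIntegral_prod _ (by fun_prop),
      ← setLIntegral_Ioi_log_one_sub_inv_sq_div]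
    exact setLIntegral_congr_fun measurableSet_Ioi fun t ht => setLIntegral_chainBelow_one ht
  have hsqrt : √(2 * π) = 2 * √(π / 2) := by
    rw [show 2 * π = 2 ^ 2 * (π / 2) by ring, sqrt_mul (by positivity), sqrt_sq zero_le_two]
  have hsymm (a b : ℝ) (r : ℝ × ℝ × ℝ) : gaussForm (a, b, r) = gaussForm (b, a, r) := by
    simp only [gaussForm, add_comm (a ^ 2)]
  rw [setLIntegral_chainBelow_min_of_symm (by fun_prop) fun a b r => by rw [hsymm],
    setLIntegral_cone_exp_neg_gaussForm, hcross, ← ENNReal.ofReal_ofNat 2,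
    ← ENNReal.ofReal_mul (by positivity), ← ENNReal.ofReal_mul zero_le_two, hsqrt]
  ring_nf

end Cone

theorem gaussian_K :
    IntegrableOn
        (fun p : ℝ × ℝ × ℝ × ℝ × ℝ =>
          Real.exp (-p.1^2/2) * Real.exp (-p.2.1^2/2) * Real.exp (p.2.2.1^2/2) *
            Real.exp (p.2.2.2.1^2/2) * Real.exp (-p.2.2.2.2^2/2))
        {p : ℝ × ℝ × ℝ × ℝ × ℝ |
          0 ≤ p.2.2.2.2 ∧ p.2.2.2.2 ≤ p.2.2.2.1 ∧ p.2.2.2.1 ≤ p.2.2.1 ∧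
            p.2.2.1 ≤ p.1 ∧ p.2.2.1 ≤ p.2.1} volume ∧
      ∫ p in {p : ℝ × ℝ × ℝ × ℝ × ℝ |
          0 ≤ p.2.2.2.2 ∧ p.2.2.2.2 ≤ p.2.2.2.1 ∧ p.2.2.2.1 ≤ p.2.2.1 ∧
            p.2.2.1 ≤ p.1 ∧ p.2.2.1 ≤ p.2.1},
          Real.exp (-p.1^2/2) * Real.exp (-p.2.1^2/2) * Real.exp (p.2.2.1^2/2) *
            Real.exp (p.2.2.2.1^2/2) * Real.exp (-p.2.2.2.2^2/2)
        = Real.sqrt (2*π) * (1/8) * (π^2/6 - (Real.log 2)^2) := by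
  have hweight (p : ℝ × ℝ × ℝ × ℝ × ℝ) :
      rexp (-p.1 ^ 2 / 2) * rexp (-p.2.1 ^ 2 / 2) * rexp (p.2.2.1 ^ 2 / 2) *
        rexp (p.2.2.2.1 ^ 2 / 2) * rexp (-p.2.2.2.2 ^ 2 / 2) = rexp (-gaussForm p / 2) := by
    simp only [gaussForm, ← exp_add]
    ring_nf
  have hvalue : 0 ≤ √(2 * π) * (1 / 8) * (π ^ 2 / 6 - log 2 ^ 2) := by
    have hlog : log 2 ^ 2 ≤ 1 :=
      pow_le_one₀ (log_nonneg one_le_two) (log_two_lt_d9.le.trans (by norm_num))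
    have hpi : 3 ^ 2 ≤ π ^ 2 := pow_le_pow_left₀ zero_le_three pi_gt_three.le 2
    exact mul_nonneg (by positivity) (by linarith)
  simp only [hweight, ← le_min_iff]
  exact integrable_and_integral_eq_of_lintegral_eq (by fun_prop)
    (.of_forall fun p => (exp_pos _).le) hvalue setLIntegral_chainBelow_min_exp_neg_gaussForm
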